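/- Let δ ≥ 0 and let X be a geodesic metric space satisfying the δ-hyperbolicity four-point inequality. Let n ≥ 1, let D be a real number with D ≥ 600δ, and let x_0, x_1, …, x_n be points of X such that d(x_i, x_{i+1}) ≥ D for all 0 ≤ i ≤ n−1 and (x_{i−1} | x_{i+1})_{x_i} ≤ D/3 for all 1 ≤ i ≤ n−1. Then d(x_0, x_n) ≥ nD/4. -/

import Mathlib

/-!
Write `(a|b)_p` for the Gromov product. The key point is that the bound on consecutive Gromov
products propagates to the base point `x₀`: `(x₀|x_{k+1})_{x_k} ≤ D/3 + δ` for every `k`.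
If this holds for `k`, then `(x_k|x₀)_{x_{k+1}} = d(x_k, x_{k+1}) - (x₀|x_{k+1})_{x_k}` is at
least `2D/3 - δ > D/3 + δ`. As `(x_k|x_{k+2})_{x_{k+1}} ≤ D/3`, the four-point inequality at
`x_{k+1}` then forces `(x₀|x_{k+2})_{x_{k+1}} ≤ D/3 + δ`. Hence each step increases the distance
to `x₀` by at least `D - 2(D/3 + δ) ≥ D/4`. The strict inequality needs `D > 0`; for `D = 0` the
theorem is trivial.
-/

/-- The Gromov product `(x|y)_z = (d(x,z) + d(y,z) - d(x,y))/2`. -/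
noncomputable def gromovProd {X : Type*} [MetricSpace X] (z x y : X) : ℝ :=
  (dist x z + dist y z - dist x y) / 2

/-- `X` satisfies the `δ`-hyperbolicity four-point inequality. -/
def IsDeltaHyperbolic (X : Type*) [MetricSpace X] (δ : ℝ) : Prop :=
  ∀ x y z w : X, min (gromovProd w x z) (gromovProd w y z) - δ ≤ gromovProd w x y

/-- `X` is a geodesic metric space: any two points are joined by an isometric image
of a real interval. -/
def IsGeodesicSpace (X : Type*) [MetricSpace X] : Prop :=
  ∀ x y : X, ∃ f : ℝ → X, f 0 = x ∧ f (dist x y) = y ∧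
    ∀ s ∈ Set.Icc (0 : ℝ) (dist x y), ∀ t ∈ Set.Icc (0 : ℝ) (dist x y),
      dist (f s) (f t) = |s - t|

/-- Joint induction for the Gromov products based at `x k` and the distances to `x 0`. -/
theorem chain_induction {X : Type*} [MetricSpace X] {δ : ℝ} (hδ : 0 ≤ δ)
    (hhyp : IsDeltaHyperbolic X δ) {n : ℕ} {D : ℝ} (hD : 600 * δ ≤ D) (hpos : 0 < D)
    (x : ℕ → X)
    (hdist : ∀ i, i ≤ n - 1 → D ≤ dist (x i) (x (i + 1)))
    (hgp : ∀ i, 1 ≤ i → i ≤ n - 1 → gromovProd (x i) (x (i - 1)) (x (i + 1)) ≤ D / 3) (k : ℕ) :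
    k ≤ n - 1 → gromovProd (x k) (x 0) (x (k + 1)) ≤ D / 3 + δ ∧
      ((k + 1 : ℕ) : ℝ) * D / 4 ≤ dist (x 0) (x (k + 1)) := by
  induction k with
  | zero =>
    intro h
    have h0 := hdist 0 h
    simp only [zero_add] at h0 ⊢
    refine ⟨?_, ?_⟩
    · unfold gromovProd
      rw [dist_self, dist_comm (x 1)]
      linarith
    · push_cast
      linarith
  | succ k ih =>
    intro h
    obtain ⟨ih1, ih2⟩ := ih (by omega)
    have hd := hdist k (by omega)
    have hd' := hdist (k + 1) h
    have hg := hgp (k + 1) (by omega) h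
    have hfour := hhyp (x k) (x (k + 1 + 1)) (x 0) (x (k + 1))
    simp only [Nat.add_sub_cancel] at hg
    have key : gromovProd (x (k + 1)) (x 0) (x (k + 1 + 1)) ≤ D / 3 + δ := by
      have hcompl : gromovProd (x (k + 1)) (x k) (x 0)
          = dist (x k) (x (k + 1)) - gromovProd (x k) (x 0) (x (k + 1)) := by
        unfold gromovProd
        rw [dist_comm (x (k + 1)) (x k), dist_comm (x k) (x 0)]
        ring
      have hsymm : gromovProd (x (k + 1)) (x (k + 1 + 1)) (x 0)
          = gromovProd (x (k + 1)) (x 0) (x (k + 1 + 1)) := by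
        unfold gromovProd
        rw [dist_comm (x (k + 1 + 1)) (x 0)]
        ring
      rw [hsymm] at hfour
      rcases min_choice (gromovProd (x (k + 1)) (x k) (x 0))
        (gromovProd (x (k + 1)) (x 0) (x (k + 1 + 1))) with hm | hm <;> rw [hm] at hfour <;>
        linarith
    refine ⟨key, ?_⟩
    unfold gromovProd at key
    rw [dist_comm (x (k + 1 + 1)) (x (k + 1))] at key
    push_cast at ih2 ⊢
    linarith

/-- If `x_0, …, x_n` are points of a geodesic `δ`-hyperbolic space with consecutive
distances at least `D ≥ 600δ` and Gromov products at the intermediate points at most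
`D/3`, then `d(x_0, x_n) ≥ nD/4`. -/
theorem chain_lower_bound {X : Type*} [MetricSpace X] {δ : ℝ} (hδ : 0 ≤ δ)
    (hgeo : IsGeodesicSpace X) (hhyp : IsDeltaHyperbolic X δ)
    {n : ℕ} (hn : 1 ≤ n) {D : ℝ} (hD : 600 * δ ≤ D)
    (x : ℕ → X)
    (hdist : ∀ i, i ≤ n - 1 → D ≤ dist (x i) (x (i + 1)))
    (hgp : ∀ i, 1 ≤ i → i ≤ n - 1 → gromovProd (x i) (x (i - 1)) (x (i + 1)) ≤ D / 3) :
    (n : ℝ) * D / 4 ≤ dist (x 0) (x n) := by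
  rcases (show 0 ≤ D by linarith).eq_or_lt with h0 | hpos
  · rw [← h0]
    simp
  · have h := (chain_induction hδ hhyp hD hpos x hdist hgp (n - 1) le_rfl).2
    rwa [Nat.sub_add_cancel hn] at h
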